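/- arXiv:2104.02714 — 2 statements merged into one kernel-verified Lean document; each statement's English description precedes it below -/
import Mathlib

section
/- There exist complex operator spaces X and Y together with a sequence of maps (f^n : X → Y)_{n∈ℕ} such that for every n ∈ ℕ the n-th amplification of f^n is an isometry from M_n(X) to M_n(Y) (i.e., X almost completely isometrically embeds into Y), while there exists no injective bounded ℝ-linear map T : X → Y whose inverse T⁻¹ : T(X) → X is bounded (i.e., X does not ℝ-isomorphically embed into Y). -/
/-!
Let `X = c₀(ℝ)`, acting by diagonal operators on `ℓ²(ℝ)`. Attach to every `k` the partition of `ℝ`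
into the cells `{δ | ⌊k δ⌋ = t}`; two distinct reals lie in different cells for large `k`.

Taking suprema over cells of the positive and negative parts of the real and imaginary parts
gives a `4`-Lipschitz map `lift` from `c₀(ℝ)` to bounded functions on the countable set of cells,
and `x γ` is recovered as the limit of `lift x` along the cells of `γ` (`tendsto_lift`): only
finitely many points carry a large value, and they are eventually separated from `γ`.

The space `Y` consists of the bounded diagonals on `ℕ × (ℝ ⊕ cells)` for which, in the `n`-th
copy, the entry at `γ ∈ ℝ` is the limit of `4 (n + 1)` times the entries along the cells of `γ`.
Let `f n` put `x` on `ℝ` and `lift x / (4 (n + 1))` on the cells of the `n`-th copy, and `0`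
elsewhere. Norms of matrices of diagonal operators are computed entrywise on the diagonal
(`matNorm_le_iff`). The `ℝ`-part of `f n` reproduces the norm of `[x i j - y i j]` exactly, while
on the cells all scalar entries are at most `1 / (n + 1)` times this norm, so that the `n × n`
matrices there do not exceed it (`matBound_of_entry_le`). Hence `f n` is an `n`-isometry.

The countably many cell entries separate the points of `Y` (`spaceY_eq_zero`). A bounded real
functional on `c₀(ℝ)` vanishes at all but countably many unit vectors, so a bounded `ℝ`-linear
`T : X → Y` sends some unit vector to an element all of whose cell entries are `0`, hence to
`0`, and `T` is not injective (`no_embedding`).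
-/

noncomputable section

open Filter Topology

namespace OSpaper

/-- The amplification of a square array of bounded operators on a Hilbert space `H` to a
bounded operator on the ℓ²-direct sum of copies of `H`. -/
def amp {𝕜 : Type*} [RCLike 𝕜] {ι : Type*} [Fintype ι] {H : Type*}
    [NormedAddCommGroup H] [InnerProductSpace 𝕜 H] (x : ι → ι → H →L[𝕜] H) :
    (PiLp 2 fun _ : ι => H) →L[𝕜] PiLp 2 fun _ : ι => H :=
  ((PiLp.continuousLinearEquiv 2 𝕜 fun _ : ι => H).symm.toContinuousLinearMap) ∘L
    (ContinuousLinearMap.pi fun i => ∑ j, (x i j).comp (ContinuousLinearMap.proj j)) ∘L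
    ((PiLp.continuousLinearEquiv 2 𝕜 fun _ : ι => H).toContinuousLinearMap)

/-- The norm of an element of `M_ι(B(H))`, i.e. the operator norm of its amplification. -/
def matNorm {𝕜 : Type*} [RCLike 𝕜] {ι : Type*} [Fintype ι] {H : Type*}
    [NormedAddCommGroup H] [InnerProductSpace 𝕜 H] (x : ι → ι → H →L[𝕜] H) : ℝ :=
  ‖amp x‖

/-- The norm of a scalar matrix `M_ι(𝕜)`, viewed as an operator on `ℓ²(ι)`. -/
def cNorm {𝕜 : Type*} [RCLike 𝕜] {ι : Type*} [Fintype ι] (a : ι → ι → 𝕜) : ℝ :=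
  matNorm fun i j => a i j • (1 : 𝕜 →L[𝕜] 𝕜)


/-! ### Diagonal operators on `ℓ²(S)` -/

/-- The Hilbert space `ℓ²(S)`. -/
abbrev L2 (S : Type) : Type := lp (fun _ : S => ℂ) 2

/-- The standard basis vector of `ℓ²(S)` at `s`. -/
def unitVec {S : Type} (s : S) : L2 S := by
  classical exact lp.single 2 s 1

lemma unitVec_self {S : Type} (s : S) : (unitVec s : L2 S) s = 1 := by
  classical
  simp [unitVec]

lemma norm_unitVec {S : Type} (s : S) : ‖(unitVec s : L2 S)‖ = 1 := by
  classical
  simp [unitVec, lp.norm_single]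

lemma l2_hasSum {S : Type} (v : L2 S) : HasSum (fun s => ‖v s‖ ^ 2) (‖v‖ ^ 2) := by
  simpa using lp.hasSum_norm (p := 2) (by simp) v

lemma l2_apply_le {S : Type} (v : L2 S) (s : S) : ‖v s‖ ≤ ‖v‖ :=
  lp.norm_apply_le_norm (by simp) v s

/-- The diagonal entry of an operator on `ℓ²(S)` at `s`, as a continuous functional. -/
def coef {S : Type} (s : S) : (L2 S →L[ℂ] L2 S) →L[ℂ] ℂ :=
  LinearMap.mkContinuous
    { toFun := fun A => A (unitVec s) s
      map_add' := fun A B => by simp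
      map_smul' := fun c A => by simp } 1 (fun A => by
        have h1 := l2_apply_le (A (unitVec s)) s
        have h2 := A.le_opNorm (unitVec s)
        rw [norm_unitVec] at h2
        simp only [LinearMap.coe_mk, AddHom.coe_mk]
        linarith)

lemma coef_apply {S : Type} (s : S) (A : L2 S →L[ℂ] L2 S) : coef s A = A (unitVec s) s := rfl

lemma norm_coef_le {S : Type} (s : S) (A : L2 S →L[ℂ] L2 S) : ‖coef s A‖ ≤ ‖A‖ := by
  have h1 := l2_apply_le (A (unitVec s)) s
  have h2 := A.le_opNorm (unitVec s)
  rw [norm_unitVec] at h2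
  rw [coef_apply]
  linarith

/-- An operator on `ℓ²(S)` is diagonal if it multiplies coordinatewise by its diagonal. -/
def IsDiag {S : Type} (A : L2 S →L[ℂ] L2 S) : Prop :=
  ∀ (v : L2 S) (s : S), A v s = coef s A * v s

lemma IsDiag.norm_le {S : Type} {A : L2 S →L[ℂ] L2 S} (hA : IsDiag A) {C : ℝ} (hC : 0 ≤ C)
    (h : ∀ s, ‖coef s A‖ ≤ C) : ‖A‖ ≤ C := by
  refine A.opNorm_le_bound hC fun v => ?_
  refine le_of_sq_le_sq ?_ (by positivity)
  rw [mul_pow]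
  refine hasSum_le (fun s => ?_) (l2_hasSum (A v)) ((l2_hasSum v).mul_left (C ^ 2))
  rw [hA v s, norm_mul, mul_pow]
  gcongr
  exact h s

lemma IsDiag.ext_coef {S : Type} {A B : L2 S →L[ℂ] L2 S} (hA : IsDiag A) (hB : IsDiag B)
    (h : ∀ s, coef s A = coef s B) : A = B := by
  ext v s
  rw [hA, hB, h]

/-- Every bounded function is the diagonal of a diagonal operator. -/
lemma exists_diag {S : Type} (a : S → ℂ) (C : ℝ) (ha : ∀ s, ‖a s‖ ≤ C) :
    ∃ A : L2 S →L[ℂ] L2 S, IsDiag A ∧ ∀ s, coef s A = a s := by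
  have hmem : ∀ v : L2 S, Memℓp (fun s => a s * v s) 2 := fun v => by
    apply memℓp_gen
    have h := (l2_hasSum v).summable.mul_left (C ^ 2)
    refine Summable.of_nonneg_of_le (fun s => by positivity) (fun s => ?_) h
    have : ‖a s * v s‖ ^ 2 ≤ C ^ 2 * ‖v s‖ ^ 2 := by
      rw [norm_mul, mul_pow]
      gcongr
      exact ha s
    simpa using this
  let L : L2 S →ₗ[ℂ] L2 S :=
    { toFun := fun v => ⟨fun s => a s * v s, hmem v⟩
      map_add' := fun v w => by
        ext s
        exact mul_add (a s) (v s) (w s)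
      map_smul' := fun c v => by
        ext s
        simp [mul_left_comm] }
  have hL : ∀ v s, L v s = a s * v s := fun v s => rfl
  have hbd : ∀ v, ‖L v‖ ≤ |C| * ‖v‖ := fun v => by
    refine le_of_sq_le_sq ?_ (by positivity)
    rw [mul_pow]
    refine hasSum_le (fun s => ?_) (l2_hasSum (L v)) ((l2_hasSum v).mul_left (|C| ^ 2))
    rw [hL v s, norm_mul, mul_pow]
    gcongr
    exact (ha s).trans (le_abs_self C)
  have hc : ∀ s, coef s (L.mkContinuous |C| hbd) = a s := fun s => by
    rw [coef_apply, LinearMap.mkContinuous_apply, hL, unitVec_self, mul_one]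
  refine ⟨L.mkContinuous |C| hbd, fun v s => ?_, hc⟩
  rw [hc, LinearMap.mkContinuous_apply, hL]

/-- The diagonal operators whose diagonal satisfies a family of conditions of the form
`L i k A → 0` along a filter, where the functionals `L i k` are uniformly bounded in `k`. Both
spaces in the theorem have this shape. -/
def diagSpace {S ι κ : Type} (L : ι → κ → (L2 S →L[ℂ] L2 S) →ₗ[ℂ] ℂ) (l : Filter κ) :
    Submodule ℂ (L2 S →L[ℂ] L2 S) where
  carrier := {A | IsDiag A ∧ ∀ i, Tendsto (fun k => L i k A) l (𝓝 0)}
  add_mem' := by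
    rintro A B ⟨hA, hA'⟩ ⟨hB, hB'⟩
    refine ⟨fun v s => ?_, fun i => ?_⟩
    · have h1 := hA v s
      have h2 := hB v s
      simp [h1, h2, add_mul]
    · simpa using (hA' i).add (hB' i)
  zero_mem' := ⟨fun v s => by simp, fun i => by simpa using tendsto_const_nhds⟩
  smul_mem' := by
    rintro c A ⟨hA, hA'⟩
    refine ⟨fun v s => ?_, fun i => ?_⟩
    · have h1 := hA v s
      simp [h1, mul_assoc]
    · simpa using (hA' i).const_mul c

lemma isClosed_diagSpace {S ι κ : Type} (L : ι → κ → (L2 S →L[ℂ] L2 S) →ₗ[ℂ] ℂ)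
    (l : Filter κ) (hL : ∀ i, ∃ C : ℝ, ∀ k A, ‖L i k A‖ ≤ C * ‖A‖) :
    IsClosed (diagSpace L l : Set (L2 S →L[ℂ] L2 S)) := by
  have h1 : IsClosed {A : L2 S →L[ℂ] L2 S | IsDiag A} := by
    simp only [IsDiag, Set.ofPred_forall]
    refine isClosed_iInter fun v => isClosed_iInter fun s => isClosed_eq ?_ ?_
    · exact (lp.evalCLM ℂ (fun _ : S => ℂ) 2 s).continuous.comp
        (ContinuousLinearMap.apply ℂ (L2 S) v).continuous
    · exact (coef s).continuous.mul continuous_const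
  have h2 : ∀ i, IsClosed {A : L2 S →L[ℂ] L2 S | Tendsto (fun k => L i k A) l (𝓝 0)} := by
    intro i
    obtain ⟨C, hC⟩ := hL i
    refine isClosed_of_closure_subset fun A hA => ?_
    rw [Metric.mem_closure_iff] at hA
    rw [Set.mem_ofPred_eq, Metric.tendsto_nhds]
    intro ε hε
    obtain ⟨B, hB, hAB⟩ := hA (ε / (2 * (|C| + 1))) (by positivity)
    filter_upwards [Metric.tendsto_nhds.1 hB (ε / 2) (by positivity)] with k hk
    rw [dist_zero_right] at hk ⊢
    have e : L i k A = L i k (A - B) + L i k B := by simp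
    have h3 : ‖L i k (A - B)‖ ≤ ε / 2 := by
      calc ‖L i k (A - B)‖ ≤ C * ‖A - B‖ := hC k _
        _ ≤ (|C| + 1) * (ε / (2 * (|C| + 1))) := by
          rw [dist_eq_norm] at hAB
          have := le_abs_self C
          gcongr
          linarith
        _ = ε / 2 := by field_simp
    rw [e]
    have := norm_add_le (L i k (A - B)) (L i k B)
    linarith
  have : (diagSpace L l : Set (L2 S →L[ℂ] L2 S)) =
      {A | IsDiag A} ∩ ⋂ i, {A | Tendsto (fun k => L i k A) l (𝓝 0)} := by
    ext A
    simp [diagSpace]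
  rw [this]
  exact h1.inter (isClosed_iInter h2)

/-! ### Matrix norms of diagonal operators -/

/-- The scalar matrix `a` has operator norm at most `R` on Euclidean `ℂⁿ`, in squared form
(so only `|R|` matters). -/
def MatBound {n : ℕ} (a : Fin n → Fin n → ℂ) (R : ℝ) : Prop :=
  ∀ w : Fin n → ℂ, ∑ i, ‖∑ j, a i j * w j‖ ^ 2 ≤ R ^ 2 * ∑ j, ‖w j‖ ^ 2

lemma amp_apply {n : ℕ} {H : Type} [NormedAddCommGroup H] [InnerProductSpace ℂ H]
    (x : Fin n → Fin n → H →L[ℂ] H) (v : PiLp 2 fun _ : Fin n => H) (i : Fin n) :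
    amp x v i = ∑ j, x i j (v j) := by
  simp [amp]

/-- The norm of a matrix of diagonal operators is the supremum of the norms of the scalar
matrices of its diagonal entries. -/
lemma matNorm_le_iff {S : Type} {n : ℕ} {A : Fin n → Fin n → L2 S →L[ℂ] L2 S}
    (hA : ∀ i j, IsDiag (A i j)) {R : ℝ} (hR : 0 ≤ R) :
    matNorm A ≤ R ↔ ∀ s, MatBound (fun i j => coef s (A i j)) R := by
  have key : ∀ (v : PiLp 2 fun _ : Fin n => L2 S) (i : Fin n) (s : S),
      (amp A v i : L2 S) s = ∑ j, coef s (A i j) * v j s := by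
    intro v i s
    rw [amp_apply, lp.coeFn_sum, Finset.sum_apply]
    exact Finset.sum_congr rfl fun j _ => hA i j (v j) s
  constructor
  · intro h s w
    let v : PiLp 2 fun _ : Fin n => L2 S := WithLp.toLp 2 fun j => w j • unitVec s
    have hv : ‖v‖ ^ 2 = ∑ j, ‖w j‖ ^ 2 := by
      rw [PiLp.norm_sq_eq_of_L2]
      simp [v, norm_smul, norm_unitVec]
    have h1 : ‖amp A v‖ ≤ R * ‖v‖ := ((amp A).le_opNorm v).trans (by gcongr; exact h)
    rw [← hv, ← mul_pow]
    calc ∑ i, ‖∑ j, coef s (A i j) * w j‖ ^ 2 = ∑ i, ‖(amp A v i : L2 S) s‖ ^ 2 := by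
          refine Finset.sum_congr rfl fun i _ => ?_
          rw [key]
          simp [v, unitVec_self]
      _ ≤ ∑ i, ‖amp A v i‖ ^ 2 := by
          gcongr
          exact l2_apply_le _ _
      _ = ‖amp A v‖ ^ 2 := (PiLp.norm_sq_eq_of_L2 _ _).symm
      _ ≤ (R * ‖v‖) ^ 2 := by gcongr
  · intro h
    refine (amp A).opNorm_le_bound hR fun v => ?_
    refine le_of_sq_le_sq ?_ (by positivity)
    rw [mul_pow, PiLp.norm_sq_eq_of_L2, PiLp.norm_sq_eq_of_L2]
    refine hasSum_le (fun s => ?_) (hasSum_sum fun i _ => l2_hasSum (amp A v i))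
      ((hasSum_sum fun j _ => l2_hasSum (v j)).mul_left (R ^ 2))
    simp only [key]
    exact h s fun j => v j s

lemma MatBound.entry_le {n : ℕ} {a : Fin n → Fin n → ℂ} {R : ℝ} (hR : 0 ≤ R)
    (h : MatBound a R) (i j : Fin n) : ‖a i j‖ ≤ R := by
  classical
  have h1 := h (Pi.single j 1)
  have h2 : ∑ k, ‖(Pi.single j 1 : Fin n → ℂ) k‖ ^ 2 = 1 := by
    rw [Finset.sum_eq_single j] <;> simp +contextual
  have h3 : ∀ i, ∑ k, a i k * (Pi.single j 1 : Fin n → ℂ) k = a i j := fun i => by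
    rw [Finset.sum_eq_single j] <;> simp +contextual
  simp only [h2, h3, mul_one] at h1
  refine le_of_sq_le_sq ?_ hR
  exact (Finset.single_le_sum (f := fun i => ‖a i j‖ ^ 2) (fun _ _ => by positivity)
    (Finset.mem_univ i)).trans h1

lemma matBound_of_entry_le {n : ℕ} {a : Fin n → Fin n → ℂ} {R : ℝ}
    (h : ∀ i j, ‖a i j‖ ≤ R / (n + 1)) : MatBound a R := by
  intro w
  have h1 : ∀ i, ‖∑ j, a i j * w j‖ ^ 2 ≤ (R / (n + 1)) ^ 2 * (n * ∑ j, ‖w j‖ ^ 2) := by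
    intro i
    have h2 : ‖∑ j, a i j * w j‖ ≤ R / (n + 1) * ∑ j, ‖w j‖ := by
      rw [Finset.mul_sum]
      refine norm_sum_le_of_le _ fun j _ => ?_
      rw [norm_mul]
      gcongr
      exact h i j
    have h3 : (∑ j, ‖w j‖) ^ 2 ≤ n * ∑ j, ‖w j‖ ^ 2 := by
      simpa using sq_sum_le_card_mul_sum_sq (s := Finset.univ) (f := fun j : Fin n => ‖w j‖)
    calc ‖∑ j, a i j * w j‖ ^ 2 ≤ (R / (n + 1) * ∑ j, ‖w j‖) ^ 2 := by gcongr
      _ = (R / (n + 1)) ^ 2 * (∑ j, ‖w j‖) ^ 2 := by ring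
      _ ≤ _ := by gcongr
  have h4 : ((n : ℝ) / (n + 1)) ^ 2 ≤ 1 := by
    have : (n : ℝ) / (n + 1) ≤ 1 := by
      rw [div_le_one (by positivity)]
      linarith
    exact pow_le_one₀ (by positivity) this
  calc ∑ i, ‖∑ j, a i j * w j‖ ^ 2
      ≤ ∑ _i : Fin n, (R / (n + 1)) ^ 2 * (n * ∑ j, ‖w j‖ ^ 2) :=
        Finset.sum_le_sum fun i _ => h1 i
    _ = (((n : ℝ) / (n + 1)) ^ 2) * (R ^ 2 * ∑ j, ‖w j‖ ^ 2) := by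
        simp only [Finset.sum_const, Finset.card_univ, Fintype.card_fin, nsmul_eq_mul]
        ring
    _ ≤ 1 * (R ^ 2 * ∑ j, ‖w j‖ ^ 2) := by gcongr
    _ = _ := one_mul _

/-! ### A Lipschitz lifting of `c₀(ℝ)` -/

/-- The supremum of `u` over the cell `{δ | ⌊k δ⌋ = t}` of the `k`-th partition of `ℝ`
for bounded `u ≥ 0`: points outside the cell contribute the value `0`. -/
def cellSup (u : ℝ → ℝ) (k : ℕ) (t : ℤ) : ℝ :=
  ⨆ δ : ℝ, if ⌊k * δ⌋ = t then u δ else 0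

lemma cellSup_bddAbove {u : ℝ → ℝ} {B : ℝ} (hB : ∀ δ, |u δ| ≤ B) (k : ℕ) (t : ℤ) :
    BddAbove (Set.range fun δ : ℝ => if ⌊k * δ⌋ = t then u δ else 0) := by
  refine ⟨B, ?_⟩
  rintro _ ⟨δ, rfl⟩
  have h := hB δ
  dsimp only
  split_ifs
  · exact (le_abs_self _).trans h
  · exact (abs_nonneg _).trans h

lemma cellSup_le_add {u v : ℝ → ℝ} {B r : ℝ} (hv : ∀ δ, |v δ| ≤ B)
    (h : ∀ δ, |u δ - v δ| ≤ r) (k : ℕ) (t : ℤ) : cellSup u k t ≤ cellSup v k t + r := by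
  refine ciSup_le fun δ => ?_
  have h1 := le_ciSup (cellSup_bddAbove hv k t) δ
  have h2 := abs_le.1 (h δ)
  have h3 : (0 : ℝ) ≤ r := (abs_nonneg _).trans (h δ)
  unfold cellSup
  split_ifs at h1 ⊢ <;> linarith

lemma abs_cellSup_sub_le {u v : ℝ → ℝ} {B B' r : ℝ} (hu : ∀ δ, |u δ| ≤ B)
    (hv : ∀ δ, |v δ| ≤ B') (h : ∀ δ, |u δ - v δ| ≤ r) (k : ℕ) (t : ℤ) :
    |cellSup u k t - cellSup v k t| ≤ r := by
  have h1 := cellSup_le_add hv h k t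
  have h2 := cellSup_le_add hu (fun δ => by rw [abs_sub_comm]; exact h δ) k t
  rw [abs_le]
  constructor <;> linarith

/-- If `u ∈ c₀(ℝ)` is nonnegative, its cell suprema along the cells of `γ` converge to `u γ`:
the finitely many other points at which `u` exceeds a given `ε` leave these cells eventually. -/
lemma tendsto_cellSup {u : ℝ → ℝ} {B : ℝ} (h0 : ∀ δ, 0 ≤ u δ) (hB : ∀ δ, |u δ| ≤ B)
    (hu : Tendsto u cofinite (𝓝 0)) (γ : ℝ) :
    Tendsto (fun k : ℕ => cellSup u k ⌊k * γ⌋) atTop (𝓝 (u γ)) := by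
  have hlow : ∀ k : ℕ, u γ ≤ cellSup u k ⌊k * γ⌋ := fun k => by
    have h1 := le_ciSup (cellSup_bddAbove hB k ⌊k * γ⌋) γ
    simpa [cellSup] using h1
  rw [Metric.tendsto_nhds]
  intro ε hε
  have hfin : {δ : ℝ | ¬ u δ < ε / 2}.Finite :=
    hu.eventually (gt_mem_nhds (by positivity : (0 : ℝ) < ε / 2))
  have hsep : ∀ δ ∈ {δ : ℝ | ¬ u δ < ε / 2}, ∀ᶠ k : ℕ in atTop,
      ⌊(k : ℝ) * δ⌋ = ⌊(k : ℝ) * γ⌋ → δ = γ := by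
    intro δ _
    by_cases hδ : δ = γ
    · exact Eventually.of_forall fun _ _ => hδ
    · have hpos : 0 < |δ - γ| := abs_pos.2 (sub_ne_zero.2 hδ)
      filter_upwards [(tendsto_natCast_atTop_atTop (R := ℝ)).eventually_ge_atTop (1 / |δ - γ|)]
        with k hk heq
      have h1 := Int.abs_sub_lt_one_of_floor_eq_floor heq
      rw [← mul_sub, abs_mul, Nat.abs_cast] at h1
      rw [div_le_iff₀ hpos] at hk
      linarith
  filter_upwards [(Filter.eventually_all_finite hfin).2 hsep] with k hk
  have hup : cellSup u k ⌊k * γ⌋ ≤ u γ + ε / 2 := by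
    refine ciSup_le fun δ => ?_
    have hγ := h0 γ
    split_ifs with hc
    · by_cases hδ : u δ < ε / 2
      · linarith
      · rw [hk δ hδ hc]
        linarith
    · linarith
  rw [Real.dist_eq, abs_lt]
  have := hlow k
  constructor <;> linarith

/-- The Lipschitz lifting: cell suprema of the positive and negative parts of the real and
imaginary parts. -/
def lift (x : ℝ → ℂ) (k : ℕ) (t : ℤ) : ℂ :=
  ((cellSup (fun δ => max (x δ).re 0) k t - cellSup (fun δ => max (-(x δ).re) 0) k t : ℝ) : ℂ) +
  ((cellSup (fun δ => max (x δ).im 0) k t - cellSup (fun δ => max (-(x δ).im) 0) k t : ℝ) : ℂ) *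
    Complex.I

lemma abs_posPart_le {a B : ℝ} (h : |a| ≤ B) : |max a 0| ≤ B := by
  have h1 := abs_max_sub_max_le_abs a 0 0
  simp only [max_self, sub_zero] at h1
  exact h1.trans h

lemma norm_lift_sub_le {x y : ℝ → ℂ} {B B' r : ℝ} (hx : ∀ δ, ‖x δ‖ ≤ B) (hy : ∀ δ, ‖y δ‖ ≤ B')
    (h : ∀ δ, ‖x δ - y δ‖ ≤ r) (k : ℕ) (t : ℤ) : ‖lift x k t - lift y k t‖ ≤ 4 * r := by
  have hre : ∀ δ, |(x δ).re - (y δ).re| ≤ r := fun δ =>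
    (Complex.abs_re_le_norm (x δ - y δ)).trans (h δ)
  have him : ∀ δ, |(x δ).im - (y δ).im| ≤ r := fun δ =>
    (Complex.abs_im_le_norm (x δ - y δ)).trans (h δ)
  have xr : ∀ δ, |(x δ).re| ≤ B := fun δ => (Complex.abs_re_le_norm _).trans (hx δ)
  have xi : ∀ δ, |(x δ).im| ≤ B := fun δ => (Complex.abs_im_le_norm _).trans (hx δ)
  have yr : ∀ δ, |(y δ).re| ≤ B' := fun δ => (Complex.abs_re_le_norm _).trans (hy δ)
  have yi : ∀ δ, |(y δ).im| ≤ B' := fun δ => (Complex.abs_im_le_norm _).trans (hy δ)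
  have e1 := abs_cellSup_sub_le (fun δ => abs_posPart_le (xr δ)) (fun δ => abs_posPart_le (yr δ))
    (fun δ => (abs_max_sub_max_le_abs _ _ _).trans (hre δ)) k t
  have e2 := abs_cellSup_sub_le (u := fun δ => max (-(x δ).re) 0)
    (v := fun δ => max (-(y δ).re) 0)
    (fun δ => abs_posPart_le (by rw [abs_neg]; exact xr δ))
    (fun δ => abs_posPart_le (by rw [abs_neg]; exact yr δ))
    (fun δ => (abs_max_sub_max_le_abs _ _ _).trans
      (by rw [← neg_sub', abs_neg]; exact hre δ)) k t
  have e3 := abs_cellSup_sub_le (fun δ => abs_posPart_le (xi δ)) (fun δ => abs_posPart_le (yi δ))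
    (fun δ => (abs_max_sub_max_le_abs _ _ _).trans (him δ)) k t
  have e4 := abs_cellSup_sub_le (u := fun δ => max (-(x δ).im) 0)
    (v := fun δ => max (-(y δ).im) 0)
    (fun δ => abs_posPart_le (by rw [abs_neg]; exact xi δ))
    (fun δ => abs_posPart_le (by rw [abs_neg]; exact yi δ))
    (fun δ => (abs_max_sub_max_le_abs _ _ _).trans
      (by rw [← neg_sub', abs_neg]; exact him δ)) k t
  rw [abs_le] at e1 e2 e3 e4
  refine (Complex.norm_le_abs_re_add_abs_im _).trans ?_
  have a1 : |(lift x k t - lift y k t).re| ≤ 2 * r := by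
    simp only [lift, Complex.sub_re, Complex.add_re, Complex.ofReal_re, Complex.mul_re,
      Complex.ofReal_im, Complex.I_re, Complex.I_im]
    rw [abs_le]
    constructor <;> linarith
  have a2 : |(lift x k t - lift y k t).im| ≤ 2 * r := by
    simp only [lift, Complex.sub_im, Complex.add_im, Complex.ofReal_re, Complex.mul_im,
      Complex.ofReal_im, Complex.I_re, Complex.I_im]
    rw [abs_le]
    constructor <;> linarith
  linarith

lemma norm_lift_le {x : ℝ → ℂ} {B : ℝ} (hx : ∀ δ, ‖x δ‖ ≤ B) (k : ℕ) (t : ℤ) :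
    ‖lift x k t‖ ≤ 4 * B := by
  have h := norm_lift_sub_le (y := fun _ => 0) (B' := 0) hx (by simp) (by simpa using hx) k t
  have h0 : lift (fun _ => 0) k t = 0 := by simp [lift]
  rwa [h0, sub_zero] at h

lemma tendsto_lift {x : ℝ → ℂ} {B : ℝ} (hx : ∀ δ, ‖x δ‖ ≤ B)
    (h0 : Tendsto x cofinite (𝓝 0)) (γ : ℝ) :
    Tendsto (fun k : ℕ => lift x k ⌊k * γ⌋) atTop (𝓝 (x γ)) := by
  have xr : ∀ δ, |(x δ).re| ≤ B := fun δ => (Complex.abs_re_le_norm _).trans (hx δ)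
  have xi : ∀ δ, |(x δ).im| ≤ B := fun δ => (Complex.abs_im_le_norm _).trans (hx δ)
  have hr : Tendsto (fun δ => (x δ).re) cofinite (𝓝 0) := by
    simpa [Function.comp_def] using (Complex.continuous_re.tendsto 0).comp h0
  have hi : Tendsto (fun δ => (x δ).im) cofinite (𝓝 0) := by
    simpa [Function.comp_def] using (Complex.continuous_im.tendsto 0).comp h0
  have part : ∀ v : ℝ → ℝ, (∀ δ, |v δ| ≤ B) → Tendsto v cofinite (𝓝 0) →
      Tendsto (fun k : ℕ => cellSup (fun δ => max (v δ) 0) k ⌊k * γ⌋ -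
        cellSup (fun δ => max (-(v δ)) 0) k ⌊k * γ⌋) atTop (𝓝 (v γ)) := by
    intro v hv hv0
    have t1 := tendsto_cellSup (u := fun δ => max (v δ) 0) (fun δ => le_max_right _ _)
      (fun δ => abs_posPart_le (hv δ)) (by simpa using hv0.max (tendsto_const_nhds (x := (0 : ℝ)))) γ
    have t2 := tendsto_cellSup (u := fun δ => max (-(v δ)) 0) (fun δ => le_max_right _ _)
      (fun δ => abs_posPart_le (by rw [abs_neg]; exact hv δ))
      (by simpa using hv0.neg.max (tendsto_const_nhds (x := (0 : ℝ)))) γ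
    have t3 := t1.sub t2
    have e : max (v γ) 0 - max (-(v γ)) 0 = v γ := by
      rcases le_total 0 (v γ) with h | h
      · rw [max_eq_left h, max_eq_right (by linarith), sub_zero]
      · rw [max_eq_right h, max_eq_left (by linarith)]
        ring
    rwa [e] at t3
  have hR := (Complex.continuous_ofReal.tendsto _).comp (part _ xr hr)
  have hI := (Complex.continuous_ofReal.tendsto _).comp (part _ xi hi)
  have := hR.add (hI.mul_const Complex.I)
  rw [Complex.re_add_im] at this
  exact this

/-! ### The two operator spaces -/

/-- The index set of the target: countably many copies of `ℝ`, each with a countable set of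
cells `(k, t)` attached. -/
abbrev Idx : Type := ℕ × (ℝ ⊕ ℕ × ℤ)

/-- The operator space `c₀(ℝ)`, as diagonal operators on `ℓ²(ℝ)`. -/
def spaceX : Submodule ℂ (L2 ℝ →L[ℂ] L2 ℝ) :=
  diagSpace (ι := Unit) (fun _ s => (coef s).toLinearMap) cofinite

/-- The functional whose convergence to `0` as `k → ∞` says that, in the `p.1`-st copy, the
rescaled cell values along the cells of `p.2` converge to the entry at `p.2`. -/
def defect (p : ℕ × ℝ) (k : ℕ) : (L2 Idx →L[ℂ] L2 Idx) →ₗ[ℂ] ℂ :=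
  (4 * ((p.1 : ℂ) + 1)) • (coef (p.1, Sum.inr (k, ⌊k * p.2⌋)) : _ →L[ℂ] ℂ).toLinearMap -
    (coef (p.1, Sum.inl p.2)).toLinearMap

lemma defect_apply (p : ℕ × ℝ) (k : ℕ) (A : L2 Idx →L[ℂ] L2 Idx) :
    defect p k A = 4 * ((p.1 : ℂ) + 1) * coef (p.1, Sum.inr (k, ⌊k * p.2⌋)) A -
      coef (p.1, Sum.inl p.2) A := by
  simp [defect]

/-- The target space: in the `n`-th copy the entries on `ℝ` are the limits of `4 (n + 1)` times
the entries at the shrinking cells. -/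
def spaceY : Submodule ℂ (L2 Idx →L[ℂ] L2 Idx) := diagSpace defect atTop

lemma isClosed_spaceX : IsClosed (spaceX : Set (L2 ℝ →L[ℂ] L2 ℝ)) :=
  isClosed_diagSpace _ _ fun _ => ⟨1, fun k A => by simpa using norm_coef_le k A⟩

lemma isClosed_spaceY : IsClosed (spaceY : Set (L2 Idx →L[ℂ] L2 Idx)) := by
  refine isClosed_diagSpace _ _ fun p => ⟨‖4 * ((p.1 : ℂ) + 1)‖ + 1, fun k A => ?_⟩
  rw [defect_apply]
  refine (norm_sub_le _ _).trans ?_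
  rw [norm_mul, add_mul, one_mul]
  gcongr
  · exact norm_coef_le _ A
  · exact norm_coef_le _ A

/-- The entries at the countably many cells separate the points of the target. -/
lemma spaceY_eq_zero {A : L2 Idx →L[ℂ] L2 Idx} (hA : A ∈ spaceY)
    (h : ∀ (n k : ℕ) (t : ℤ), coef (n, Sum.inr (k, t)) A = 0) : A = 0 := by
  refine IsDiag.ext_coef hA.1 (fun v s => by simp) fun s => ?_
  rw [map_zero]
  obtain ⟨n, γ | ⟨k, t⟩⟩ := s
  · have h1 := hA.2 (n, γ)
    simp only [defect_apply, h, mul_zero, zero_sub] at h1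
    exact neg_eq_zero.1 (tendsto_nhds_unique tendsto_const_nhds h1)
  · exact h n k t

/-- The diagonal of the image of an element of `c₀(ℝ)` with diagonal `x` under the `n`-th
embedding: in the `n`-th copy, `x` itself together with its rescaled lifting. -/
def embDiag (n : ℕ) (x : ℝ → ℂ) : Idx → ℂ
  | (m, Sum.inl γ) => if m = n then x γ else 0
  | (m, Sum.inr (k, t)) => if m = n then lift x k t / (4 * ((n : ℂ) + 1)) else 0

lemma norm_scale (n : ℕ) : ‖(4 * ((n : ℂ) + 1))‖ = 4 * ((n : ℝ) + 1) := by
  have : (4 * ((n : ℂ) + 1)) = ((4 * ((n : ℝ) + 1) : ℝ) : ℂ) := by push_cast; ring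
  rw [this, Complex.norm_real, Real.norm_of_nonneg (by positivity)]

lemma exists_emb (n : ℕ) (x : spaceX) :
    ∃ A : spaceY, ∀ s, coef s (A : L2 Idx →L[ℂ] L2 Idx) =
      embDiag n (fun γ => coef γ (x : L2 ℝ →L[ℂ] L2 ℝ)) s := by
  have hx : ∀ γ, ‖coef γ (x : L2 ℝ →L[ℂ] L2 ℝ)‖ ≤ ‖(x : L2 ℝ →L[ℂ] L2 ℝ)‖ :=
    fun γ => norm_coef_le γ _
  obtain ⟨A, hA, hAc⟩ := exists_diag (embDiag n fun γ => coef γ (x : L2 ℝ →L[ℂ] L2 ℝ))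
    (4 * ‖(x : L2 ℝ →L[ℂ] L2 ℝ)‖) (by
      have hn := norm_nonneg (x : L2 ℝ →L[ℂ] L2 ℝ)
      rintro ⟨m, γ | ⟨k, t⟩⟩
      · simp only [embDiag]
        split_ifs
        · exact (hx γ).trans (by linarith)
        · simp
      · simp only [embDiag]
        split_ifs
        · rw [norm_div, norm_scale]
          refine (div_le_self (norm_nonneg _) ?_).trans (norm_lift_le hx k t)
          have : (0 : ℝ) ≤ n := n.cast_nonneg
          linarith
        · simp)
  refine ⟨⟨A, hA, fun p => ?_⟩, hAc⟩
  obtain ⟨m, γ⟩ := p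
  simp only [defect_apply, hAc, embDiag]
  by_cases hm : m = n
  · subst hm
    have hne : (4 * ((m : ℂ) + 1)) ≠ 0 := by
      rw [← norm_pos_iff, norm_scale]
      positivity
    have h1 := (tendsto_lift hx (x.2.2 ()) γ).sub_const (coef γ (x : L2 ℝ →L[ℂ] L2 ℝ))
    rw [sub_self] at h1
    simpa [mul_div_cancel₀ _ hne] using h1
  · simp [hm]

/-! ### No linear embedding -/

/-- A real functional which is bounded on the signed finite sums of a family, such as the unit
vectors of `c₀(ℝ)`, vanishes at all but countably many members, because its values there are
absolutely summable. -/
lemma countable_support_functional {V : Type} [AddCommGroup V] [Module ℝ V] (E : ℝ → V)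
    (ψ : V →ₗ[ℝ] ℝ) (C : ℝ)
    (hψ : ∀ (F : Finset ℝ) (c : ℝ → ℝ), (∀ γ, |c γ| ≤ 1) → |ψ (∑ γ ∈ F, c γ • E γ)| ≤ C) :
    {γ | ψ (E γ) ≠ 0}.Countable := by
  have hs : Summable fun γ => |ψ (E γ)| := by
    refine summable_of_sum_le (c := C) (fun γ => abs_nonneg _) fun F => ?_
    have h1 := hψ F (fun γ => SignType.sign (ψ (E γ))) (fun γ => by
      rcases lt_trichotomy (ψ (E γ)) 0 with h | h | h <;> simp [h])
    calc ∑ γ ∈ F, |ψ (E γ)|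
        = ψ (∑ γ ∈ F, ((SignType.sign (ψ (E γ)) : SignType) : ℝ) • E γ) := by
          simp [map_sum, sign_mul_self]
      _ ≤ C := (le_abs_self _).trans h1
  refine hs.countable_support.mono fun γ hγ => ?_
  simpa using hγ

lemma exists_unit (γ : ℝ) : ∃ e : spaceX, ∀ s,
    coef s (e : L2 ℝ →L[ℂ] L2 ℝ) = if s = γ then 1 else 0 := by
  obtain ⟨A, hA, hAc⟩ := exists_diag (fun s : ℝ => if s = γ then (1 : ℂ) else 0) 1 (fun s => by
    split_ifs <;> simp)
  refine ⟨⟨A, hA, fun _ => ?_⟩, hAc⟩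
  refine tendsto_const_nhds.congr' ?_
  have : ∀ᶠ s in cofinite, s ≠ γ := by simp [eventually_cofinite]
  filter_upwards [this] with s hs
  simp [hAc, hs]

lemma norm_sum_unit_le (E : ℝ → spaceX)
    (hE : ∀ γ s, coef s (E γ : L2 ℝ →L[ℂ] L2 ℝ) = if s = γ then 1 else 0)
    (F : Finset ℝ) (c : ℝ → ℝ) (hc : ∀ γ, |c γ| ≤ 1) : ‖∑ γ ∈ F, c γ • E γ‖ ≤ 1 := by
  refine IsDiag.norm_le (∑ γ ∈ F, c γ • E γ).2.1 zero_le_one fun s => ?_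
  have : coef s ((∑ γ ∈ F, c γ • E γ : spaceX) : L2 ℝ →L[ℂ] L2 ℝ) =
      if s ∈ F then (c s : ℂ) else 0 := by
    have e : ∀ γ, coef s (((c γ • E γ : spaceX)) : L2 ℝ →L[ℂ] L2 ℝ) =
        if s = γ then (c γ : ℂ) else 0 := fun γ => by
      have : ((c γ • E γ : spaceX) : L2 ℝ →L[ℂ] L2 ℝ) =
        (c γ : ℂ) • (E γ : L2 ℝ →L[ℂ] L2 ℝ) := rfl
      rw [this, map_smul, hE]
      simp
    rw [Submodule.coe_sum, map_sum]
    rw [Finset.sum_congr rfl fun γ _ => e γ, Finset.sum_ite_eq]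
  rw [this]
  split_ifs
  · simpa using hc s
  · simp

/-- The composition of `T` with an entry functional, followed by a real coordinate `p` of `ℂ`. -/
def entryFunctional (T : spaceX →ₗ[ℝ] spaceY) (p : ℂ →ₗ[ℝ] ℝ) (s : Idx) : spaceX →ₗ[ℝ] ℝ where
  toFun x := p (coef s (T x : L2 Idx →L[ℂ] L2 Idx))
  map_add' x y := by
    rw [map_add T, Submodule.coe_add, map_add, map_add]
  map_smul' c x := by
    have h : ((c • T x : spaceY) : L2 Idx →L[ℂ] L2 Idx) =
      (c : ℂ) • (T x : L2 Idx →L[ℂ] L2 Idx) := rfl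
    rw [map_smul T, h, map_smul, smul_eq_mul, ← Complex.real_smul, map_smul]
    rfl

lemma countable_entry_support (E : ℝ → spaceX)
    (hE : ∀ γ s, coef s (E γ : L2 ℝ →L[ℂ] L2 ℝ) = if s = γ then 1 else 0)
    (T : spaceX →ₗ[ℝ] spaceY) (C : ℝ) (hC : ∀ x, ‖T x‖ ≤ C * ‖x‖)
    (p : ℂ →ₗ[ℝ] ℝ) (hp : ∀ z, |p z| ≤ ‖z‖) (s : Idx) :
    {γ | p (coef s (T (E γ) : L2 Idx →L[ℂ] L2 Idx)) ≠ 0}.Countable := by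
  refine countable_support_functional E (entryFunctional T p s) |C| fun F c hc => ?_
  refine (hp _).trans ((norm_coef_le s _).trans ((hC _).trans ?_))
  calc C * ‖∑ γ ∈ F, c γ • E γ‖ ≤ |C| * 1 := by
        gcongr
        · exact le_abs_self C
        · exact norm_sum_unit_le E hE F c hc
    _ = |C| := mul_one _

/-- Some unit vector of `c₀(ℝ)` is annihilated by all the countably many functionals that
separate the points of the target. -/
lemma no_embedding (T : spaceX →ₗ[ℝ] spaceY) (hT : Function.Injective T) (C : ℝ)
    (hC : ∀ x, ‖T x‖ ≤ C * ‖x‖) : False := by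
  choose E hE using exists_unit
  have hcount : (⋃ q : ℕ × ℕ × ℤ,
      ({γ | Complex.reLm (coef (q.1, Sum.inr q.2) (T (E γ) : L2 Idx →L[ℂ] L2 Idx)) ≠ 0} ∪
        {γ | Complex.imLm (coef (q.1, Sum.inr q.2) (T (E γ) : L2 Idx →L[ℂ] L2 Idx)) ≠ 0})
      ).Countable :=
    Set.countable_iUnion fun q =>
      (countable_entry_support E hE T C hC _ Complex.abs_re_le_norm _).union
        (countable_entry_support E hE T C hC _ Complex.abs_im_le_norm _)
  obtain ⟨γ, hγ⟩ : ∃ γ, γ ∉ _ := by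
    by_contra hcon
    push Not at hcon
    exact Cardinal.not_countable_real (hcount.mono fun γ _ => hcon γ)
  simp only [Set.mem_iUnion, Set.mem_union, not_exists, Set.mem_ofPred_eq, not_or, not_not] at hγ
  have h0 : (T (E γ) : L2 Idx →L[ℂ] L2 Idx) = 0 :=
    spaceY_eq_zero (T (E γ)).2 fun n k t => Complex.ext (hγ (n, k, t)).1 (hγ (n, k, t)).2
  have h1 : T (E γ) = T 0 := by
    rw [map_zero]
    exact Subtype.ext h0
  have h2 := hE γ γ
  rw [hT h1] at h2
  simp at h2

/-- There are operator spaces `X` and `Y` such that `X` almost completely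
isometrically embeds into `Y`, but `X` does not ℝ-isomorphically embed into `Y`. -/
theorem statement_0 :
    ∃ (H₁ : Type) (_ : NormedAddCommGroup H₁) (_ : InnerProductSpace ℂ H₁)
      (_ : CompleteSpace H₁)
      (H₂ : Type) (_ : NormedAddCommGroup H₂) (_ : InnerProductSpace ℂ H₂)
      (_ : CompleteSpace H₂)
      (X : Submodule ℂ (H₁ →L[ℂ] H₁)) (Y : Submodule ℂ (H₂ →L[ℂ] H₂)),
      IsClosed (X : Set (H₁ →L[ℂ] H₁)) ∧ IsClosed (Y : Set (H₂ →L[ℂ] H₂)) ∧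
      -- `X` almost completely isometrically embeds into `Y`:
      (∃ f : ℕ → (X → Y), ∀ n : ℕ, ∀ x y : Fin n → Fin n → X,
        matNorm (fun i j => (f n (x i j) : H₂ →L[ℂ] H₂) - (f n (y i j) : H₂ →L[ℂ] H₂)) =
          matNorm fun i j => (x i j : H₁ →L[ℂ] H₁) - (y i j : H₁ →L[ℂ] H₁)) ∧
      -- `X` does not ℝ-isomorphically embed into `Y`:
      ¬ ∃ T : X →ₗ[ℝ] Y, Function.Injective T ∧
          (∃ C : ℝ, ∀ x : X, ‖T x‖ ≤ C * ‖x‖) ∧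
          (∃ c : ℝ, 0 < c ∧ ∀ x : X, c * ‖x‖ ≤ ‖T x‖) := by
  choose f hf using exists_emb
  refine ⟨L2 ℝ, inferInstance, inferInstance, inferInstance, L2 Idx, inferInstance,
    inferInstance, inferInstance, spaceX, spaceY, isClosed_spaceX, isClosed_spaceY,
    ⟨f, fun n x y => ?_⟩, ?_⟩
  · have dX : ∀ i j, IsDiag ((x i j : L2 ℝ →L[ℂ] L2 ℝ) - (y i j : L2 ℝ →L[ℂ] L2 ℝ)) :=
      fun i j => (x i j - y i j).2.1
    have dY : ∀ i j, IsDiag ((f n (x i j) : L2 Idx →L[ℂ] L2 Idx) -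
        (f n (y i j) : L2 Idx →L[ℂ] L2 Idx)) :=
      fun i j => (f n (x i j) - f n (y i j)).2.1
    apply le_antisymm
    · set R := matNorm fun i j => (x i j : L2 ℝ →L[ℂ] L2 ℝ) - (y i j : L2 ℝ →L[ℂ] L2 ℝ) with hRdef
      have hR : 0 ≤ R := norm_nonneg _
      have hb := (matNorm_le_iff dX hR).1 le_rfl
      refine (matNorm_le_iff dY hR).2 ?_
      rintro ⟨m, γ | ⟨k, t⟩⟩
      · by_cases hm : m = n
        · simpa [hf, embDiag, hm] using hb γ
        · refine matBound_of_entry_le fun i j => ?_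
          simp only [map_sub, hf, embDiag, if_neg hm, sub_self, norm_zero]
          positivity
      · refine matBound_of_entry_le fun i j => ?_
        simp only [map_sub, hf, embDiag]
        split_ifs
        · rw [← sub_div, norm_div, norm_scale]
          have h1 := norm_lift_sub_le
            (fun δ => norm_coef_le δ (x i j : L2 ℝ →L[ℂ] L2 ℝ))
            (fun δ => norm_coef_le δ (y i j : L2 ℝ →L[ℂ] L2 ℝ))
            (fun δ => by simpa using (hb δ).entry_le hR i j) k t
          rw [← mul_div_mul_left R ((n : ℝ) + 1) (four_ne_zero)]
          gcongr
        · simp only [sub_self, norm_zero]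
          positivity
    · have hR : 0 ≤ matNorm fun i j => (f n (x i j) : L2 Idx →L[ℂ] L2 Idx) -
        (f n (y i j) : L2 Idx →L[ℂ] L2 Idx) := norm_nonneg _
      have hb := (matNorm_le_iff dY hR).1 le_rfl
      refine (matNorm_le_iff dX hR).2 fun γ => ?_
      simpa only [map_sub, hf, embDiag, if_true] using hb (n, Sum.inl γ)
  · rintro ⟨T, hT, ⟨C, hC⟩, -⟩
    exact no_embedding T hT C hC

end OSpaper
end
end

section
/- Let X be a separable real Banach space and let Y be a separable linear subspace of the dual space X*. Then the Borel σ-algebra on Y generated by the open sets of the norm topology coincides with the Borel σ-algebra on Y generated by the open sets of the relative weak* topology (the topology induced on Y by the weak* topology σ(X*, X)). -/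
/-!
The weak* topology is coarser than the norm topology, which gives one inclusion. Conversely, a
closed ball of `Y` is weak*-closed, since the dual norm is a supremum of weak*-continuous
functions; and since `Y` is norm-separable, hence Lindelöf, each norm-open set is a countable union
of closed balls, hence weak*-Borel.
-/

noncomputable section

namespace OSpaper

/-- Closed balls of `Y` are closed for the topology of pointwise convergence. -/
lemma isClosed_induced_closedBall {E : Type*} [NormedAddCommGroup E] [NormedSpace ℝ E]
    (Y : Submodule ℝ (E →L[ℝ] ℝ)) (y : Y) {r : ℝ} (hr : 0 ≤ r) :
    @IsClosed Y (TopologicalSpace.induced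
      (fun y : Y => ((y : E →L[ℝ] ℝ) : E → ℝ)) Pi.topologicalSpace) (Metric.closedBall y r) := by
  rw [isClosed_induced_iff]
  refine ⟨⋂ x : E, {f : E → ℝ | ‖f x - (y : E →L[ℝ] ℝ) x‖ ≤ r * ‖x‖}, ?_, ?_⟩
  · exact isClosed_iInter fun x => isClosed_le (by fun_prop) (by fun_prop)
  · ext z
    simp only [Set.mem_preimage, Set.mem_iInter, Set.mem_ofPred_eq, Metric.mem_closedBall,
      Subtype.dist_eq]
    rw [dist_eq_norm]
    exact (ContinuousLinearMap.opNorm_le_iff (f := (z : E →L[ℝ] ℝ) - (y : E →L[ℝ] ℝ)) hr).symm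

/-- **Statement 19.** For a separable subspace `Y` of the dual of a separable real Banach
space `X`, the Borel σ-algebra of the norm topology on `Y` coincides with the Borel
σ-algebra of the relative weak* topology (the topology of pointwise convergence on `X`). -/
theorem statement_19
    (E : Type*) [NormedAddCommGroup E] [NormedSpace ℝ E] [CompleteSpace E]
    [TopologicalSpace.SeparableSpace E]
    (Y : Submodule ℝ (E →L[ℝ] ℝ)) [TopologicalSpace.SeparableSpace Y] :
    @borel Y (inferInstance : TopologicalSpace Y) =
      @borel Y (TopologicalSpace.induced
        (fun y : Y => ((y : E →L[ℝ] ℝ) : E → ℝ)) Pi.topologicalSpace) := by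
  apply le_antisymm
  · refine MeasurableSpace.generateFrom_le fun U hU => ?_
    replace hU : IsOpen U := by simpa using hU
    have : SecondCountableTopology Y := UniformSpace.secondCountable_of_separable Y
    have hball : ∀ y ∈ U, ∃ r > 0, Metric.closedBall y r ⊆ U := fun y hy =>
      Metric.nhds_basis_closedBall.mem_iff.1 (hU.mem_nhds hy)
    choose! r hr hrU using hball
    obtain ⟨t, htU, ht, hUt⟩ := TopologicalSpace.countable_cover_nhdsWithin
      (f := fun y => Metric.closedBall y (r y)) (s := U)
      fun y hy => mem_nhdsWithin_of_mem_nhds (Metric.closedBall_mem_nhds y (hr y hy))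
    have hU_eq : U = ⋃ y ∈ t, Metric.closedBall y (r y) :=
      hUt.antisymm (Set.iUnion₂_subset fun y hy => hrU y (htU hy))
    rw [hU_eq]
    refine MeasurableSet.biUnion ht fun y hy => ?_
    have hc := isClosed_induced_closedBall Y y (hr y (htU hy)).le
    refine MeasurableSet.of_compl (MeasurableSpace.measurableSet_generateFrom ?_)
    exact hc.isOpen_compl
  · refine borel_anti (continuous_iff_le_induced.1 ?_)
    exact continuous_pi fun x => by fun_prop

end OSpaper
end
end
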